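/- Let σ: ℂ → ℝ be smooth, h: ℂ → ℝ smooth with compact support, and for a compactly supported smooth test function φ define F(ε) = ∫ h R_{g_ε} dv_{g_ε} where the metric g_ε has inverse components g_ε^{zz̄} = 2e^{−σ}, g_ε^{zz} = εφ (and conjugate). Then dF/dε at ε = 0 equals ∫ (−∂_z²h + ∂_zσ ∂_z h) φ e^σ d²z. -/

import Mathlib

open MeasureTheory

/-- Partial derivative ∂_i in the coordinates (x¹,x²) on ℂ ≅ ℝ². -/
noncomputable def pd (i : Fin 2) (f : ℂ → ℝ) (z : ℂ) : ℝ :=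
  fderiv ℝ f z (if i = 0 then 1 else Complex.I)

/-- Christoffel symbols Γ^a_{bc} of a metric g on ℂ ≅ ℝ². -/
noncomputable def christoffel (g : ℂ → Matrix (Fin 2) (Fin 2) ℝ)
    (a b c : Fin 2) (z : ℂ) : ℝ :=
  (1/2) * ∑ d : Fin 2, (g z)⁻¹ a d *
    (pd b (fun w => g w d c) z + pd c (fun w => g w d b) z - pd d (fun w => g w b c) z)

/-- Riemann curvature tensor R^a_{bcd}. -/
noncomputable def riemann (g : ℂ → Matrix (Fin 2) (Fin 2) ℝ)
    (a b c d : Fin 2) (z : ℂ) : ℝ :=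
  pd c (fun w => christoffel g a b d w) z - pd d (fun w => christoffel g a b c w) z +
    ∑ l : Fin 2, (christoffel g a l c z * christoffel g l b d z -
      christoffel g a l d z * christoffel g l b c z)

/-- Scalar curvature R_g = g^{bd} R^a_{bad}. -/
noncomputable def scalarCurv (g : ℂ → Matrix (Fin 2) (Fin 2) ℝ) (z : ℂ) : ℝ :=
  ∑ b : Fin 2, ∑ d : Fin 2, (g z)⁻¹ b d * (∑ a : Fin 2, riemann g a b a d z)

/-- The inverse metric of the perturbed metric g_ε with complex components
g^{zz̄} = 2e^{−σ}, g^{zz} = (ε₁+iε₂)φ, written as a real 2×2 matrix. -/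
noncomputable def Ainv (σ φ : ℂ → ℝ) (ε₁ ε₂ : ℝ) (z : ℂ) :
    Matrix (Fin 2) (Fin 2) ℝ :=
  !![Real.exp (-(σ z)) + ε₁ * φ z / 2, ε₂ * φ z / 2;
     ε₂ * φ z / 2, Real.exp (-(σ z)) - ε₁ * φ z / 2]

/-- Wirtinger derivative ∂_z = (∂₁ − i∂₂)/2. -/
noncomputable def wz (f : ℂ → ℂ) (z : ℂ) : ℂ :=
  (fderiv ℝ f z 1 - Complex.I * fderiv ℝ f z Complex.I) / 2


set_option linter.unusedSimpArgs false

lemma pd_add' {i : Fin 2} {f g : ℂ → ℝ} {z : ℂ} (hf : DifferentiableAt ℝ f z)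
    (hg : DifferentiableAt ℝ g z) : pd i (fun w => f w + g w) z = pd i f z + pd i g z := by
  simp only [pd]; rw [fderiv_fun_add hf hg]; rfl

lemma pd_sub' {i : Fin 2} {f g : ℂ → ℝ} {z : ℂ} (hf : DifferentiableAt ℝ f z)
    (hg : DifferentiableAt ℝ g z) : pd i (fun w => f w - g w) z = pd i f z - pd i g z := by
  simp only [pd]; rw [fderiv_fun_sub hf hg]; rfl

lemma pd_const' {i : Fin 2} {c : ℝ} {z : ℂ} : pd i (fun _ => c) z = 0 := by
  simp [pd]

lemma pd_mul' {i : Fin 2} {f g : ℂ → ℝ} {z : ℂ} (hf : DifferentiableAt ℝ f z)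
    (hg : DifferentiableAt ℝ g z) :
    pd i (fun w => f w * g w) z = pd i f z * g z + f z * pd i g z := by
  simp only [pd]; rw [fderiv_fun_mul hf hg]; simp; ring

lemma pd_div' {i : Fin 2} {f g : ℂ → ℝ} {z : ℂ} (hf : DifferentiableAt ℝ f z)
    (hg : DifferentiableAt ℝ g z) (h0 : g z ≠ 0) :
    pd i (fun w => f w / g w) z = (pd i f z * g z - f z * pd i g z) / (g z) ^ 2 := by
  simp only [pd]
  have h1 : HasFDerivAt (fun w => (g w)⁻¹) (-((g z) ^ 2)⁻¹ • fderiv ℝ g z) z :=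
    (hasDerivAt_inv h0).comp_hasFDerivAt z hg.hasFDerivAt
  have h2 := (hf.hasFDerivAt.mul h1).fderiv
  have h3 : (fun w => f w / g w) = f * fun w => (g w)⁻¹ := by ext w; simp [div_eq_mul_inv]
  rw [h3, h2]; simp; field_simp; ring

lemma pd_sqrt' {i : Fin 2} {g : ℂ → ℝ} {z : ℂ}
    (hg : DifferentiableAt ℝ g z) (h0 : g z ≠ 0) :
    pd i (fun w => Real.sqrt (g w)) z = pd i g z / (2 * Real.sqrt (g z)) := by
  simp only [pd]
  rw [(hg.hasFDerivAt.sqrt h0).fderiv]; simp; ring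

lemma pd_exp' {i : Fin 2} {g : ℂ → ℝ} {z : ℂ}
    (hg : DifferentiableAt ℝ g z) :
    pd i (fun w => Real.exp (g w)) z = Real.exp (g z) * pd i g z := by
  simp only [pd]
  rw [(hg.hasFDerivAt.exp).fderiv]; simp

lemma pd_neg' {i : Fin 2} {g : ℂ → ℝ} {z : ℂ} :
    pd i (fun w => -(g w)) z = - pd i g z := by
  simp only [pd]
  rw [fderiv_fun_neg]; simp

lemma pd_contDiff {i : Fin 2} {f : ℂ → ℝ} (hf : ContDiff ℝ (⊤ : ℕ∞) f) :
    ContDiff ℝ (⊤ : ℕ∞) (pd i f) := by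
  unfold pd
  exact (hf.fderiv_right (m := (⊤ : ℕ∞)) (by simp)).clm_apply contDiff_const

lemma pd_comm {f : ℂ → ℝ} (hf : ContDiff ℝ (⊤ : ℕ∞) f) (i j : Fin 2) (z : ℂ) :
    pd i (pd j f) z = pd j (pd i f) z := by
  have hd : DifferentiableAt ℝ (fderiv ℝ f) z :=
    ((hf.fderiv_right (m := (⊤ : ℕ∞)) (by simp)).differentiable (by simp)) z
  have hs : IsSymmSndFDerivAt ℝ f z :=
    hf.contDiffAt.isSymmSndFDerivAt (by
      rw [minSmoothness_of_isRCLikeNormedField]; exact WithTop.coe_le_coe.2 le_top)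
  have key : ∀ k l : Fin 2, pd k (pd l f) z
      = fderiv ℝ (fderiv ℝ f) z (if k = 0 then 1 else Complex.I) (if l = 0 then 1 else Complex.I) := by
    intro k l
    unfold pd
    rw [fderiv_clm_apply hd (by fun_prop)]
    simp
  rw [key, key, hs.eq]

lemma curv_formula (E F G E1 E2 F1 F2 G1 G2 : ℂ → ℝ)
    (hE : Differentiable ℝ E) (hF : Differentiable ℝ F) (hG : Differentiable ℝ G)
    (hE1 : Differentiable ℝ E1) (hE2 : Differentiable ℝ E2)
    (hF1 : Differentiable ℝ F1) (hF2 : Differentiable ℝ F2)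
    (hG1 : Differentiable ℝ G1) (hG2 : Differentiable ℝ G2)
    (eE1 : pd 0 E = E1) (eE2 : pd 1 E = E2) (eF1 : pd 0 F = F1) (eF2 : pd 1 F = F2)
    (eG1 : pd 0 G = G1) (eG2 : pd 1 G = G2)
    (sE : ∀ z, pd 0 E2 z = pd 1 E1 z) (sF : ∀ z, pd 0 F2 z = pd 1 F1 z)
    (sG : ∀ z, pd 0 G2 z = pd 1 G1 z)
    (posE : ∀ z, 0 < E z) (posD : ∀ z, 0 < E z * G z - F z * F z)
    (g : ℂ → Matrix (Fin 2) (Fin 2) ℝ)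
    (hg : ∀ z, g z = !![E z, F z; F z, G z]) (z : ℂ) :
    scalarCurv g z * Real.sqrt (g z).det =
      pd 0 (fun w => (F w * E2 w / E w - G1 w) / Real.sqrt (E w * G w - F w * F w)) z +
      pd 1 (fun w => (2 * F1 w - E2 w - F w * E1 w / E w) /
        Real.sqrt (E w * G w - F w * F w)) z := by
  have hinv : ∀ z, (g z)⁻¹ = !![G z / (E z * G z - F z * F z), -(F z / (E z * G z - F z * F z));
      -(F z / (E z * G z - F z * F z)), E z / (E z * G z - F z * F z)] := by
    intro z
    have := (posD z).ne'
    apply Matrix.inv_eq_right_inv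
    rw [hg]
    ext i j
    fin_cases i <;> fin_cases j <;> simp [Matrix.mul_apply, Fin.sum_univ_two]
    · rw [← sub_eq_add_neg, ← mul_div_assoc, ← mul_div_assoc, ← sub_div, div_self this]
    · ring
    · ring
    · rw [← mul_div_assoc, ← mul_div_assoc, neg_add_eq_sub, ← sub_div,
        mul_comm (G z), div_self this]
  have g00 : (fun w => g w 0 0) = E := by ext w; simp [hg]
  have g01 : (fun w => g w 0 1) = F := by ext w; simp [hg]
  have g10 : (fun w => g w 1 0) = F := by ext w; simp [hg]
  have g11 : (fun w => g w 1 1) = G := by ext w; simp [hg]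
  have c000 : (fun w => christoffel g 0 0 0 w) = fun z =>
      (G z * E1 z - 2 * F z * F1 z + F z * E2 z) / (2 * (E z * G z - F z * F z)) := by
    ext w; have := (posD w).ne'
    simp [christoffel, Fin.sum_univ_two, g00, g01, g10, g11, hinv, eE1, eE2, eF1, eF2, eG1, eG2]
    field_simp; ring
  have c001 : (fun w => christoffel g 0 0 1 w) = fun z =>
      (G z * E2 z - F z * G1 z) / (2 * (E z * G z - F z * F z)) := by
    ext w; have := (posD w).ne'
    simp [christoffel, Fin.sum_univ_two, g00, g01, g10, g11, hinv, eE1, eE2, eF1, eF2, eG1, eG2]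
    field_simp; ring
  have c010 : (fun w => christoffel g 0 1 0 w) = fun z =>
      (G z * E2 z - F z * G1 z) / (2 * (E z * G z - F z * F z)) := by
    ext w; have := (posD w).ne'
    simp [christoffel, Fin.sum_univ_two, g00, g01, g10, g11, hinv, eE1, eE2, eF1, eF2, eG1, eG2]
    field_simp; ring
  have c011 : (fun w => christoffel g 0 1 1 w) = fun z =>
      (2 * G z * F2 z - G z * G1 z - F z * G2 z) / (2 * (E z * G z - F z * F z)) := by
    ext w; have := (posD w).ne'
    simp [christoffel, Fin.sum_univ_two, g00, g01, g10, g11, hinv, eE1, eE2, eF1, eF2, eG1, eG2]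
    field_simp; ring
  have c100 : (fun w => christoffel g 1 0 0 w) = fun z =>
      (2 * E z * F1 z - E z * E2 z - F z * E1 z) / (2 * (E z * G z - F z * F z)) := by
    ext w; have := (posD w).ne'
    simp [christoffel, Fin.sum_univ_two, g00, g01, g10, g11, hinv, eE1, eE2, eF1, eF2, eG1, eG2]
    field_simp; ring
  have c101 : (fun w => christoffel g 1 0 1 w) = fun z =>
      (E z * G1 z - F z * E2 z) / (2 * (E z * G z - F z * F z)) := by
    ext w; have := (posD w).ne'
    simp [christoffel, Fin.sum_univ_two, g00, g01, g10, g11, hinv, eE1, eE2, eF1, eF2, eG1, eG2]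
    field_simp; ring
  have c110 : (fun w => christoffel g 1 1 0 w) = fun z =>
      (E z * G1 z - F z * E2 z) / (2 * (E z * G z - F z * F z)) := by
    ext w; have := (posD w).ne'
    simp [christoffel, Fin.sum_univ_two, g00, g01, g10, g11, hinv, eE1, eE2, eF1, eF2, eG1, eG2]
    field_simp; ring
  have c111 : (fun w => christoffel g 1 1 1 w) = fun z =>
      (E z * G2 z - 2 * F z * F2 z + F z * G1 z) / (2 * (E z * G z - F z * F z)) := by
    ext w; have := (posD w).ne'
    simp [christoffel, Fin.sum_univ_two, g00, g01, g10, g11, hinv, eE1, eE2, eF1, eF2, eG1, eG2]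
    field_simp; ring
  have hD2 : 2 * (E z * G z - F z * F z) ≠ 0 := by have := posD z; positivity
  have hD := posD z
  have hEz := (posE z).ne'
  have hDn := hD.ne'
  have hsq : Real.sqrt (E z * G z - F z * F z) ≠ 0 := (Real.sqrt_pos.2 hD).ne'
  have dsq : DifferentiableAt ℝ (fun w => Real.sqrt (E w * G w - F w * F w)) z := by
    exact DifferentiableAt.sqrt (f := fun w => E w * G w - F w * F w) (by fun_prop) hDn
  have dP : DifferentiableAt ℝ (fun w => F w * E2 w / E w) z := by
    fun_prop (disch := assumption)
  have dQ : DifferentiableAt ℝ (fun w => F w * E1 w / E w) z := by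
    fun_prop (disch := assumption)
  have hdet : (g z).det = E z * G z - F z * F z := by rw [hg, Matrix.det_fin_two]; simp
  rw [hdet]
  rw [pd_div' (by fun_prop) dsq hsq, pd_div' (by fun_prop) dsq hsq,
    pd_sqrt' (by fun_prop) hDn, pd_sqrt' (by fun_prop) hDn,
    pd_sub' dP (by fun_prop), pd_sub' (by fun_prop) dQ, pd_div' (by fun_prop) (by fun_prop) hEz,
    pd_div' (by fun_prop) (by fun_prop) hEz]
  have f000 := congrFun c000 z
  have f001 := congrFun c001 z
  have f010 := congrFun c010 z
  have f011 := congrFun c011 z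
  have f100 := congrFun c100 z
  have f101 := congrFun c101 z
  have f110 := congrFun c110 z
  have f111 := congrFun c111 z
  simp only [scalarCurv, riemann, Fin.sum_univ_two, c000, c001, c010, c011, c100, c101, c110, c111,
    f000, f001, f010, f011, f100, f101, f110, f111, hinv]
  simp only [Matrix.of_apply, Matrix.cons_val_zero, Matrix.cons_val_one, Matrix.cons_val',
    Matrix.cons_val_fin_one]
  simp (disch := first | fun_prop | assumption) only [pd_div', pd_add', pd_sub', pd_mul', pd_const',
    eE1, eE2, eF1, eF2, eG1, eG2, sE, sF, sG]
  set s := Real.sqrt (E z * G z - F z * F z) with hs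
  have hss : s ^ 2 = E z * G z - F z * F z := Real.sq_sqrt hD.le
  generalize E z = e at *
  generalize F z = f at *
  generalize pd 0 E1 z = E11 at *
  generalize pd 1 E1 z = E12 at *
  generalize pd 1 E2 z = E22 at *
  generalize pd 0 F1 z = F11 at *
  generalize pd 1 F1 z = F12 at *
  generalize pd 1 F2 z = F22 at *
  generalize pd 0 G1 z = G11 at *
  generalize pd 1 G1 z = G12 at *
  generalize pd 1 G2 z = G22 at *
  clear hs
  have hGz : G z = (s ^ 2 + f * f) / e := by rw [hss]; field_simp; ring
  clear_value s
  clear f000 f001 f010 f011 f100 f101 f110 f111 c000 c001 c010 c011 c100 c101 c110 c111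
  rw [← hss]
  rw [hGz]
  field_simp
  ring

lemma ibp (i : Fin 2) (f g : ℂ → ℝ) (hf : ContDiff ℝ (⊤ : ℕ∞) f) (hg : ContDiff ℝ (⊤ : ℕ∞) g)
    (hs : HasCompactSupport f) : ∫ z, f z * pd i g z = - ∫ z, pd i f z * g z := by
  have cf := (pd_contDiff (i := i) hf).continuous
  have cg := (pd_contDiff (i := i) hg).continuous
  have hs' : HasCompactSupport (pd i f) := hs.fderiv_apply ℝ _
  unfold pd at *
  apply integral_mul_fderiv_eq_neg_fderiv_mul_of_integrable
  · exact (cf.mul hg.continuous).integrable_of_hasCompactSupport hs'.mul_right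
  · exact (hf.continuous.mul cg).integrable_of_hasCompactSupport hs.mul_right
  · exact (hf.continuous.mul hg.continuous).integrable_of_hasCompactSupport hs.mul_right
  · exact fun x _ => hf.differentiable (by simp) x
  · exact fun x _ => hg.differentiable (by simp) x

lemma integral_pd_zero (i : Fin 2) (f : ℂ → ℝ) (hf : ContDiff ℝ (⊤ : ℕ∞) f)
    (hs : HasCompactSupport f) : ∫ z, pd i f z = 0 := by
  have := ibp i f (fun _ => 1) hf contDiff_const hs
  simp [pd_const'] at this
  exact this

lemma param_deriv (K : ℝ × ℂ → ℝ) (δ : ℝ) (hδ : 0 < δ)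
    (hK : ∀ t z, |t| < δ → ContDiffAt ℝ (⊤ : ℕ∞) K (t, z)) (S : Set ℂ) (hS : IsCompact S)
    (h0 : ∀ t z, z ∉ S → K (t, z) = 0) (k : ℂ → ℝ)
    (hk : ∀ z, HasDerivAt (fun t => K (t, z)) (k z) 0) :
    HasDerivAt (fun t => ∫ z, K (t, z)) (∫ z, k z) 0 := by
  set K' : ℝ → ℂ → ℝ := fun t z => fderiv ℝ K (t, z) (1, 0) with hK'
  have hder : ∀ t z, |t| < δ → HasDerivAt (fun t => K (t, z)) (K' t z) t := by
    intro t z ht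
    have h1 := ((hK t z ht).differentiableAt (by simp)).hasFDerivAt
    have h2 : HasDerivAt (fun t : ℝ => (t, z)) ((1 : ℝ), (0 : ℂ)) t :=
      (hasDerivAt_id t).prodMk (hasDerivAt_const t z)
    exact h1.comp_hasDerivAt t h2
  have hkK : k = K' 0 := by
    ext z; exact (hk z).unique (hder 0 z (by simpa using hδ))
  have hcont : ∀ t z, |t| < δ → ContinuousAt (fun p : ℝ × ℂ => fderiv ℝ K p (1, 0)) (t, z) := by
    intro t z ht
    have h1 : ContDiffAt ℝ 0 (fderiv ℝ K) (t, z) :=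
      (hK t z ht).fderiv_right (m := 0) (by simp)
    exact h1.continuousAt.clm_apply continuousAt_const
  have hz : ∀ t z, |t| < δ → z ∉ S → K' t z = 0 := by
    intro t z ht hzS
    refine (hder t z ht).unique ?_
    have : (fun t => K (t, z)) = fun _ => 0 := by ext t; exact h0 t z hzS
    rw [this]; exact hasDerivAt_const _ _
  have hcomp : IsCompact (Set.Icc (-(δ/2)) (δ/2) ×ˢ S) := isCompact_Icc.prod hS
  have hcon : ContinuousOn (fun p : ℝ × ℂ => fderiv ℝ K p (1, 0)) (Set.Icc (-(δ/2)) (δ/2) ×ˢ S) := by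
    rintro ⟨t, z⟩ ⟨ht, hzS⟩
    refine (hcont t z ?_).continuousWithinAt
    rw [abs_lt]; simp only [Set.mem_Icc] at ht; constructor <;> linarith [ht.1, ht.2]
  obtain ⟨C, hC⟩ := hcomp.exists_bound_of_continuousOn hcon
  have slice : ∀ t, |t| < δ → Continuous (fun z => K (t, z)) := by
    intro t ht
    rw [continuous_iff_continuousAt]
    intro z
    exact ContinuousAt.comp (f := fun z => (t, z)) (hK t z ht).continuousAt (by fun_prop)
  have slice' : Continuous (K' 0) := by
    rw [continuous_iff_continuousAt]
    intro z
    exact ContinuousAt.comp (f := fun z => ((0 : ℝ), z)) (hcont 0 z (by simpa using hδ)) (by fun_prop)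
  rw [hkK]
  have hball : ∀ t ∈ Metric.ball (0 : ℝ) (δ/2), |t| < δ := by
    intro t ht; simp at ht; linarith
  refine (hasDerivAt_integral_of_dominated_loc_of_deriv_le (F := fun t z => K (t, z)) (F' := K')
    (bound := S.indicator fun _ => C)
    (Metric.ball_mem_nhds (0 : ℝ) (half_pos hδ)) ?_ ?_ ?_ ?_ ?_ ?_).2
  · filter_upwards [Metric.ball_mem_nhds (0 : ℝ) (half_pos hδ)] with t ht
    exact (slice t (hball t ht)).aestronglyMeasurable
  · exact (slice 0 (by simpa using hδ)).integrable_of_hasCompactSupport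
      (HasCompactSupport.intro hS (h0 0))
  · exact slice'.aestronglyMeasurable
  · refine Filter.Eventually.of_forall fun z t ht => ?_
    by_cases hzS : z ∈ S
    · rw [Set.indicator_of_mem hzS]
      apply hC (t, z) ⟨?_, hzS⟩
      simp at ht
      have := abs_lt.1 ht
      constructor <;> linarith [this.1, this.2]
    · rw [Set.indicator_of_notMem hzS, hz t z (hball t ht) hzS]; simp
  · exact (integrable_indicator_iff hS.measurableSet).2 (integrableOn_const hS.measure_lt_top.ne)
  · exact Filter.Eventually.of_forall fun z t ht => hder t z (hball t ht)

noncomputable def Lf (k e f t : ℝ) : ℝ := e + t * k * f / 2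
noncomputable def qE (a b c : ℝ) : ℝ := c / (a * c - b * b)
noncomputable def qF (a b c : ℝ) : ℝ := (-b) / (a * c - b * b)
noncomputable def qG (a b c : ℝ) : ℝ := a / (a * c - b * b)
noncomputable def qE' (a b c a' b' c' : ℝ) : ℝ :=
  (c' * (a * c - b * b) - c * (a' * c + a * c' - (b' * b + b * b'))) / (a * c - b * b) ^ 2
noncomputable def qF' (a b c a' b' c' : ℝ) : ℝ :=
  ((-b') * (a * c - b * b) - (-b) * (a' * c + a * c' - (b' * b + b * b'))) / (a * c - b * b) ^ 2
noncomputable def qG' (a b c a' b' c' : ℝ) : ℝ :=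
  (a' * (a * c - b * b) - a * (a' * c + a * c' - (b' * b + b * b'))) / (a * c - b * b) ^ 2

lemma Lf_der (k e f : ℝ) : HasDerivAt (Lf k e f) (k * f / 2) 0 := by
  unfold Lf
  have := ((((hasDerivAt_id (0:ℝ)).mul_const k).mul_const f).div_const 2).const_add e
  simpa using this

lemma qE_der (α β e f : ℝ) (he : 0 < e) : HasDerivAt (fun t => qE (Lf α e f t) (Lf β 0 f t) (Lf (-α) e f t))
    (-(α * f) / (2 * e ^ 2)) 0 := by
  unfold qE
  have a := Lf_der α e f
  have b := Lf_der β 0 f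
  have c := Lf_der (-α) e f
  have := c.fun_div ((a.fun_mul c).fun_sub (b.fun_mul b)) (by simp [Lf]; exact he.ne')
  refine this.congr_deriv ?_
  simp [Lf]; field_simp; ring
lemma qF_der (α β e f : ℝ) (he : 0 < e) : HasDerivAt (fun t => qF (Lf α e f t) (Lf β 0 f t) (Lf (-α) e f t))
    (-(β * f) / (2 * e ^ 2)) 0 := by
  unfold qF
  have a := Lf_der α e f
  have b := Lf_der β 0 f
  have c := Lf_der (-α) e f
  have := b.fun_neg.fun_div ((a.fun_mul c).fun_sub (b.fun_mul b)) (by simp [Lf]; exact he.ne')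
  refine this.congr_deriv ?_
  simp [Lf]; field_simp
lemma qG_der (α β e f : ℝ) (he : 0 < e) : HasDerivAt (fun t => qG (Lf α e f t) (Lf β 0 f t) (Lf (-α) e f t))
    ((α * f) / (2 * e ^ 2)) 0 := by
  unfold qG
  have a := Lf_der α e f
  have b := Lf_der β 0 f
  have c := Lf_der (-α) e f
  have := a.fun_div ((a.fun_mul c).fun_sub (b.fun_mul b)) (by simp [Lf]; exact he.ne')
  refine this.congr_deriv ?_
  simp [Lf]; field_simp; ring
lemma qE'_der (α β e f e1 f1 : ℝ) (he : 0 < e) : HasDerivAt (fun t => qE' (Lf α e f t) (Lf β 0 f t) (Lf (-α) e f t)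
      (Lf α e1 f1 t) (Lf β 0 f1 t) (Lf (-α) e1 f1 t))
    (-(α * f1) / (2 * e ^ 2) + α * f * e1 / e ^ 3) 0 := by
  unfold qE'
  have a := Lf_der α e f
  have b := Lf_der β 0 f
  have c := Lf_der (-α) e f
  have a' := Lf_der α e1 f1
  have b' := Lf_der β 0 f1
  have c' := Lf_der (-α) e1 f1
  have D := (a.fun_mul c).fun_sub (b.fun_mul b)
  have D' := ((a'.fun_mul c).fun_add (a.fun_mul c')).fun_sub ((b'.fun_mul b).fun_add (b.fun_mul b'))
  have := ((c'.fun_mul D).fun_sub (c.fun_mul D')).fun_div (D.fun_pow 2) (by simp [Lf]; exact he.ne')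
  refine this.congr_deriv ?_
  simp [Lf]; field_simp; ring
lemma qF'_der (α β e f e1 f1 : ℝ) (he : 0 < e) : HasDerivAt (fun t => qF' (Lf α e f t) (Lf β 0 f t) (Lf (-α) e f t)
      (Lf α e1 f1 t) (Lf β 0 f1 t) (Lf (-α) e1 f1 t))
    (-(β * f1) / (2 * e ^ 2) + β * f * e1 / e ^ 3) 0 := by
  unfold qF'
  have a := Lf_der α e f
  have b := Lf_der β 0 f
  have c := Lf_der (-α) e f
  have a' := Lf_der α e1 f1
  have b' := Lf_der β 0 f1
  have c' := Lf_der (-α) e1 f1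
  have D := (a.fun_mul c).fun_sub (b.fun_mul b)
  have D' := ((a'.fun_mul c).fun_add (a.fun_mul c')).fun_sub ((b'.fun_mul b).fun_add (b.fun_mul b'))
  have := ((b'.fun_neg.fun_mul D).fun_sub (b.fun_neg.fun_mul D')).fun_div (D.fun_pow 2)
    (by simp [Lf]; exact he.ne')
  refine this.congr_deriv ?_
  simp [Lf]; field_simp; ring
lemma qG'_der (α β e f e1 f1 : ℝ) (he : 0 < e) : HasDerivAt (fun t => qG' (Lf α e f t) (Lf β 0 f t) (Lf (-α) e f t)
      (Lf α e1 f1 t) (Lf β 0 f1 t) (Lf (-α) e1 f1 t))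
    ((α * f1) / (2 * e ^ 2) - α * f * e1 / e ^ 3) 0 := by
  unfold qG'
  have a := Lf_der α e f
  have b := Lf_der β 0 f
  have c := Lf_der (-α) e f
  have a' := Lf_der α e1 f1
  have b' := Lf_der β 0 f1
  have c' := Lf_der (-α) e1 f1
  have D := (a.fun_mul c).fun_sub (b.fun_mul b)
  have D' := ((a'.fun_mul c).fun_add (a.fun_mul c')).fun_sub ((b'.fun_mul b).fun_add (b.fun_mul b'))
  have := ((a'.fun_mul D).fun_sub (a.fun_mul D')).fun_div (D.fun_pow 2)
    (by simp [Lf]; exact he.ne')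
  refine this.congr_deriv ?_
  simp [Lf]; field_simp; ring

/-- The flux integrand h₁ P + h₂ Q as a function of E, F, G and first derivatives. -/
noncomputable def flux (h1 h2 E F G E1 E2 F1 G1 : ℝ) : ℝ :=
  h1 * ((F * E2 / E - G1) / Real.sqrt (E * G - F * F)) +
  h2 * ((2 * F1 - E2 - F * E1 / E) / Real.sqrt (E * G - F * F))

lemma flux_der (h1 h2 : ℝ) (E F G E1 E2 F1 G1 : ℝ → ℝ) (E' F' G' E1' E2' F1' G1' e e1 e2 : ℝ)
    (he : 0 < e)
    (dE : HasDerivAt E E' 0) (dF : HasDerivAt F F' 0) (dG : HasDerivAt G G' 0)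
    (dE1 : HasDerivAt E1 E1' 0) (dE2 : HasDerivAt E2 E2' 0)
    (dF1 : HasDerivAt F1 F1' 0) (dG1 : HasDerivAt G1 G1' 0)
    (vE : E 0 = 1 / e) (vF : F 0 = 0) (vG : G 0 = 1 / e)
    (vE1 : E1 0 = - e1 / e ^ 2) (vE2 : E2 0 = - e2 / e ^ 2) (vF1 : F1 0 = 0)
    (vG1 : G1 0 = - e1 / e ^ 2) (htr : E' + G' = 0) :
    HasDerivAt (fun t => flux h1 h2 (E t) (F t) (G t) (E1 t) (E2 t) (F1 t) (G1 t))
      (h1 * (- F' * e2 - e * G1') + h2 * (e * (2 * F1' - E2') + F' * e1)) 0 := by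
  unfold flux
  have hE0 : E 0 ≠ 0 := by rw [vE]; positivity
  have hD0 : E 0 * G 0 - F 0 * F 0 = (1 / e) * (1 / e) := by rw [vE, vF, vG]; ring
  have hDn : E 0 * G 0 - F 0 * F 0 ≠ 0 := by rw [hD0]; positivity
  have hsq : Real.sqrt (E 0 * G 0 - F 0 * F 0) = 1 / e := by
    rw [hD0, Real.sqrt_mul_self (by positivity)]
  have dW := ((dE.fun_mul dG).fun_sub (dF.fun_mul dF)).sqrt hDn
  have hsn : Real.sqrt (E 0 * G 0 - F 0 * F 0) ≠ 0 := by rw [hsq]; positivity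
  have dP := ((((dF.fun_mul dE2).fun_div dE hE0).fun_sub dG1).fun_div dW hsn).const_mul h1
  have dQ := ((((dF1.const_mul 2).fun_sub dE2).fun_sub ((dF.fun_mul dE1).fun_div dE hE0)).fun_div
    dW hsn).const_mul h2
  have := dP.fun_add dQ
  refine this.congr_deriv ?_
  rw [hsq, vE, vF, vG, vE1, vE2, vF1, vG1]
  have : G' = -E' := by linarith
  subst this
  field_simp
  ring

section cd
variable {X : Type*} [NormedAddCommGroup X] [NormedSpace ℝ X] {x : X}

lemma Lf_cd (k : ℝ) {e f t : X → ℝ} (he : ContDiffAt ℝ (⊤ : ℕ∞) e x)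
    (hf : ContDiffAt ℝ (⊤ : ℕ∞) f x) (ht : ContDiffAt ℝ (⊤ : ℕ∞) t x) :
    ContDiffAt ℝ (⊤ : ℕ∞) (fun x => Lf k (e x) (f x) (t x)) x := by
  unfold Lf; fun_prop

lemma qE_cd {a b c : X → ℝ} (ha : ContDiffAt ℝ (⊤ : ℕ∞) a x)
    (hb : ContDiffAt ℝ (⊤ : ℕ∞) b x) (hc : ContDiffAt ℝ (⊤ : ℕ∞) c x)
    (h0 : a x * c x - b x * b x ≠ 0) :
    ContDiffAt ℝ (⊤ : ℕ∞) (fun x => qE (a x) (b x) (c x)) x := by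
  unfold qE; fun_prop (disch := assumption)
lemma qF_cd {a b c : X → ℝ} (ha : ContDiffAt ℝ (⊤ : ℕ∞) a x)
    (hb : ContDiffAt ℝ (⊤ : ℕ∞) b x) (hc : ContDiffAt ℝ (⊤ : ℕ∞) c x)
    (h0 : a x * c x - b x * b x ≠ 0) :
    ContDiffAt ℝ (⊤ : ℕ∞) (fun x => qF (a x) (b x) (c x)) x := by
  unfold qF; fun_prop (disch := assumption)
lemma qG_cd {a b c : X → ℝ} (ha : ContDiffAt ℝ (⊤ : ℕ∞) a x)
    (hb : ContDiffAt ℝ (⊤ : ℕ∞) b x) (hc : ContDiffAt ℝ (⊤ : ℕ∞) c x)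
    (h0 : a x * c x - b x * b x ≠ 0) :
    ContDiffAt ℝ (⊤ : ℕ∞) (fun x => qG (a x) (b x) (c x)) x := by
  unfold qG; fun_prop (disch := assumption)
lemma qE'_cd {a b c a' b' c' : X → ℝ} (ha : ContDiffAt ℝ (⊤ : ℕ∞) a x)
    (hb : ContDiffAt ℝ (⊤ : ℕ∞) b x) (hc : ContDiffAt ℝ (⊤ : ℕ∞) c x)
    (ha' : ContDiffAt ℝ (⊤ : ℕ∞) a' x)
    (hb' : ContDiffAt ℝ (⊤ : ℕ∞) b' x) (hc' : ContDiffAt ℝ (⊤ : ℕ∞) c' x)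
    (h0 : a x * c x - b x * b x ≠ 0) :
    ContDiffAt ℝ (⊤ : ℕ∞) (fun x => qE' (a x) (b x) (c x) (a' x) (b' x) (c' x)) x := by
  have h2 := pow_ne_zero 2 h0
  unfold qE'; fun_prop (disch := assumption)
lemma qF'_cd {a b c a' b' c' : X → ℝ} (ha : ContDiffAt ℝ (⊤ : ℕ∞) a x)
    (hb : ContDiffAt ℝ (⊤ : ℕ∞) b x) (hc : ContDiffAt ℝ (⊤ : ℕ∞) c x)
    (ha' : ContDiffAt ℝ (⊤ : ℕ∞) a' x)
    (hb' : ContDiffAt ℝ (⊤ : ℕ∞) b' x) (hc' : ContDiffAt ℝ (⊤ : ℕ∞) c' x)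
    (h0 : a x * c x - b x * b x ≠ 0) :
    ContDiffAt ℝ (⊤ : ℕ∞) (fun x => qF' (a x) (b x) (c x) (a' x) (b' x) (c' x)) x := by
  have h2 := pow_ne_zero 2 h0
  unfold qF'; fun_prop (disch := assumption)
lemma qG'_cd {a b c a' b' c' : X → ℝ} (ha : ContDiffAt ℝ (⊤ : ℕ∞) a x)
    (hb : ContDiffAt ℝ (⊤ : ℕ∞) b x) (hc : ContDiffAt ℝ (⊤ : ℕ∞) c x)
    (ha' : ContDiffAt ℝ (⊤ : ℕ∞) a' x)
    (hb' : ContDiffAt ℝ (⊤ : ℕ∞) b' x) (hc' : ContDiffAt ℝ (⊤ : ℕ∞) c' x)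
    (h0 : a x * c x - b x * b x ≠ 0) :
    ContDiffAt ℝ (⊤ : ℕ∞) (fun x => qG' (a x) (b x) (c x) (a' x) (b' x) (c' x)) x := by
  have h2 := pow_ne_zero 2 h0
  unfold qG'; fun_prop (disch := assumption)

lemma P_cd {E F G E2 G1 : X → ℝ}
    (hE : ContDiffAt ℝ (⊤ : ℕ∞) E x) (hF : ContDiffAt ℝ (⊤ : ℕ∞) F x)
    (hG : ContDiffAt ℝ (⊤ : ℕ∞) G x)
    (hE2 : ContDiffAt ℝ (⊤ : ℕ∞) E2 x) (hG1 : ContDiffAt ℝ (⊤ : ℕ∞) G1 x)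
    (hE0 : E x ≠ 0) (hD : 0 < E x * G x - F x * F x) :
    ContDiffAt ℝ (⊤ : ℕ∞) (fun w => (F w * E2 w / E w - G1 w) /
      Real.sqrt (E w * G w - F w * F w)) x := by
  have h1 : ContDiffAt ℝ (⊤ : ℕ∞) (fun w => Real.sqrt (E w * G w - F w * F w)) x :=
    ContDiffAt.sqrt (f := fun w => E w * G w - F w * F w) (by fun_prop) hD.ne'
  have h2 : Real.sqrt (E x * G x - F x * F x) ≠ 0 := (Real.sqrt_pos.2 hD).ne'
  exact ContDiffAt.fun_div (by fun_prop (disch := assumption)) h1 h2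

lemma Q_cd {E F G E1 E2 F1 : X → ℝ}
    (hE : ContDiffAt ℝ (⊤ : ℕ∞) E x) (hF : ContDiffAt ℝ (⊤ : ℕ∞) F x)
    (hG : ContDiffAt ℝ (⊤ : ℕ∞) G x) (hE1 : ContDiffAt ℝ (⊤ : ℕ∞) E1 x)
    (hE2 : ContDiffAt ℝ (⊤ : ℕ∞) E2 x) (hF1 : ContDiffAt ℝ (⊤ : ℕ∞) F1 x)
    (hE0 : E x ≠ 0) (hD : 0 < E x * G x - F x * F x) :
    ContDiffAt ℝ (⊤ : ℕ∞) (fun w => (2 * F1 w - E2 w - F w * E1 w / E w) /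
      Real.sqrt (E w * G w - F w * F w)) x := by
  have h1 : ContDiffAt ℝ (⊤ : ℕ∞) (fun w => Real.sqrt (E w * G w - F w * F w)) x :=
    ContDiffAt.sqrt (f := fun w => E w * G w - F w * F w) (by fun_prop) hD.ne'
  have h2 : Real.sqrt (E x * G x - F x * F x) ≠ 0 := (Real.sqrt_pos.2 hD).ne'
  exact ContDiffAt.fun_div (by fun_prop (disch := assumption)) h1 h2
end cd

lemma pd_Lf {k t : ℝ} {i : Fin 2} {e f : ℂ → ℝ} {z : ℂ} (he : DifferentiableAt ℝ e z)
    (hf : DifferentiableAt ℝ f z) :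
    pd i (fun w => Lf k (e w) (f w) t) z = Lf k (pd i e z) (pd i f z) t := by
  have : (fun w => Lf k (e w) (f w) t) = fun w => e w + (t * k / 2) * f w := by
    ext w; simp only [Lf]; ring
  rw [this, pd_add' he (by fun_prop), pd_mul' (by fun_prop) hf, pd_const']
  simp only [Lf]; ring

lemma q_pos {a b c : ℝ} (hc : 0 < c) (hD : 0 < a * c - b * b) :
    0 < qE a b c ∧ 0 < qE a b c * qG a b c - qF a b c * qF a b c := by
  refine ⟨div_pos hc hD, ?_⟩
  have : qE a b c * qG a b c - qF a b c * qF a b c = 1 / (a * c - b * b) := by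
    unfold qE qG qF
    rw [div_mul_div_comm, div_mul_div_comm, ← sub_div, div_eq_div_iff (by positivity) hD.ne']
    ring
  rw [this]; positivity

lemma pd_q {i : Fin 2} {a b c : ℂ → ℝ} {z : ℂ} (ha : DifferentiableAt ℝ a z)
    (hb : DifferentiableAt ℝ b z) (hc : DifferentiableAt ℝ c z)
    (hD : a z * c z - b z * b z ≠ 0) :
    pd i (fun w => qE (a w) (b w) (c w)) z =
      qE' (a z) (b z) (c z) (pd i a z) (pd i b z) (pd i c z) ∧
    pd i (fun w => qF (a w) (b w) (c w)) z =
      qF' (a z) (b z) (c z) (pd i a z) (pd i b z) (pd i c z) ∧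
    pd i (fun w => qG (a w) (b w) (c w)) z =
      qG' (a z) (b z) (c z) (pd i a z) (pd i b z) (pd i c z) := by
  unfold qE qF qG qE' qF' qG'
  refine ⟨?_, ?_, ?_⟩ <;>
  · rw [pd_div' (by fun_prop) (by fun_prop) hD, pd_sub' (by fun_prop) (by fun_prop),
      pd_mul' ha hc, pd_mul' hb hb]
    try rw [pd_neg']

lemma exists_delta (σ φ : ℂ → ℝ) (α β : ℝ) (hσ : ContDiff ℝ (⊤ : ℕ∞) σ)
    (hφ : ContDiff ℝ (⊤ : ℕ∞) φ) (hφs : HasCompactSupport φ) :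
    ∃ δ > 0, ∀ t z, |t| < δ → 0 < Lf (-α) (Real.exp (-(σ z))) (φ z) t ∧
      0 < Lf α (Real.exp (-(σ z))) (φ z) t * Lf (-α) (Real.exp (-(σ z))) (φ z) t -
        Lf β 0 (φ z) t * Lf β 0 (φ z) t := by
  have cσ := hσ.continuous
  have cφ := hφ.continuous
  have hs : HasCompactSupport (fun z => φ z * ((|α| + |β|) * Real.exp (σ z))) := hφs.mul_right
  obtain ⟨C, hC⟩ := hs.exists_bound_of_continuous (by fun_prop)
  have hC0 : 0 ≤ C := (norm_nonneg _).trans (hC 0)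
  refine ⟨1 / (C + 1), by positivity, fun t z ht => ?_⟩
  have h1 := hC z
  rw [Real.norm_eq_abs, abs_mul, abs_of_nonneg (by positivity : 0 ≤ (|α| + |β|) * Real.exp (σ z))] at h1
  have hexp : Real.exp (-(σ z)) * Real.exp (σ z) = 1 := by rw [← Real.exp_add]; simp
  set e := Real.exp (-(σ z)) with he
  have e0 : 0 < e := Real.exp_pos _
  have h2 : |t| * (|φ z| * (|α| + |β|)) < e := by
    have h3 : |φ z| * (|α| + |β|) ≤ C * e := by
      calc |φ z| * (|α| + |β|) = (|φ z| * ((|α| + |β|) * Real.exp (σ z))) * e := by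
            linear_combination (-(|φ z| * (|α| + |β|))) * hexp
        _ ≤ C * e := by gcongr
    have h4 : |t| * (C + 1) < 1 := by rwa [lt_div_iff₀ (by positivity)] at ht
    calc |t| * (|φ z| * (|α| + |β|)) ≤ |t| * (C * e) := by gcongr
      _ = (|t| * C) * e := by ring
      _ < 1 * e := by
        gcongr
        nlinarith [abs_nonneg t, abs_nonneg (1 / (C + 1) - |t|), mul_nonneg (abs_nonneg t) hC0,
          (by
            rcases eq_or_lt_of_le (abs_nonneg t) with h | h
            · rw [← h]; norm_num
            · nlinarith : |t| * C < 1)]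
      _ = e := one_mul e
  set x := t * α * φ z / 2 with hx
  set y := t * β * φ z / 2 with hy
  have hxy : |x| + |y| < e := by
    have : |x| + |y| = (|t| * (|φ z| * (|α| + |β|))) / 2 := by
      rw [hx, hy, abs_div, abs_div, abs_mul, abs_mul, abs_mul, abs_mul, abs_two]; ring
    rw [this]
    have : 0 ≤ |t| * (|φ z| * (|α| + |β|)) := by positivity
    linarith
  have la : Lf α e (φ z) t = e + x := by simp only [Lf, hx]
  have lb : Lf β 0 (φ z) t = y := by simp only [Lf, hy]; ring
  have lc : Lf (-α) e (φ z) t = e - x := by simp only [Lf, hx]; ring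
  rw [la, lb, lc]
  have hx1 := le_abs_self x
  have hy0 := abs_nonneg y
  have hx0 := abs_nonneg x
  refine ⟨by linarith, ?_⟩
  have : x ^ 2 + y ^ 2 < e ^ 2 := by
    rw [← sq_abs x, ← sq_abs y]; nlinarith
  nlinarith

/-- flux at parameter t and point z. -/
noncomputable def fluxK (σ φ h : ℂ → ℝ) (α β : ℝ) (p : ℝ × ℂ) : ℝ :=
  let e : ℂ → ℝ := fun w => Real.exp (-(σ w))
  let a := Lf α (e p.2) (φ p.2) p.1
  let b := Lf β 0 (φ p.2) p.1
  let c := Lf (-α) (e p.2) (φ p.2) p.1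
  let a1 := Lf α (pd 0 e p.2) (pd 0 φ p.2) p.1
  let b1 := Lf β 0 (pd 0 φ p.2) p.1
  let c1 := Lf (-α) (pd 0 e p.2) (pd 0 φ p.2) p.1
  let a2 := Lf α (pd 1 e p.2) (pd 1 φ p.2) p.1
  let b2 := Lf β 0 (pd 1 φ p.2) p.1
  let c2 := Lf (-α) (pd 1 e p.2) (pd 1 φ p.2) p.1
  flux (pd 0 h p.2) (pd 1 h p.2) (qE a b c) (qF a b c) (qG a b c)
    (qE' a b c a1 b1 c1) (qE' a b c a2 b2 c2) (qF' a b c a1 b1 c1) (qG' a b c a1 b1 c1)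

lemma fluxK_cd (σ φ h : ℂ → ℝ) (α β : ℝ) (hσ : ContDiff ℝ (⊤ : ℕ∞) σ)
    (hφ : ContDiff ℝ (⊤ : ℕ∞) φ) (hh : ContDiff ℝ (⊤ : ℕ∞) h) (t : ℝ) (z : ℂ)
    (hc : 0 < Lf (-α) (Real.exp (-(σ z))) (φ z) t)
    (hD : 0 < Lf α (Real.exp (-(σ z))) (φ z) t * Lf (-α) (Real.exp (-(σ z))) (φ z) t -
        Lf β 0 (φ z) t * Lf β 0 (φ z) t) :
    ContDiffAt ℝ (⊤ : ℕ∞) (fluxK σ φ h α β) (t, z) := by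
  have snd : ∀ {f : ℂ → ℝ}, ContDiff ℝ (⊤ : ℕ∞) f →
      ContDiffAt ℝ (⊤ : ℕ∞) (fun p : ℝ × ℂ => f p.2) (t, z) := fun hf =>
    (hf.comp contDiff_snd).contDiffAt
  have fst : ContDiffAt ℝ (⊤ : ℕ∞) (fun p : ℝ × ℂ => p.1) (t, z) := contDiff_fst.contDiffAt
  have he : ContDiff ℝ (⊤ : ℕ∞) (fun w => Real.exp (-(σ w))) := by fun_prop
  have h0 : ContDiffAt ℝ (⊤ : ℕ∞) (fun p : ℝ × ℂ => (0 : ℝ)) (t, z) := contDiffAt_const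
  have ka := Lf_cd α (snd he) (snd hφ) fst
  have kb := Lf_cd β h0 (snd hφ) fst
  have kc := Lf_cd (-α) (snd he) (snd hφ) fst
  have ka1 := Lf_cd α (snd (pd_contDiff (i := 0) he)) (snd (pd_contDiff (i := 0) hφ)) fst
  have kb1 := Lf_cd β h0 (snd (pd_contDiff (i := 0) hφ)) fst
  have kc1 := Lf_cd (-α) (snd (pd_contDiff (i := 0) he)) (snd (pd_contDiff (i := 0) hφ)) fst
  have ka2 := Lf_cd α (snd (pd_contDiff (i := 1) he)) (snd (pd_contDiff (i := 1) hφ)) fst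
  have kb2 := Lf_cd β h0 (snd (pd_contDiff (i := 1) hφ)) fst
  have kc2 := Lf_cd (-α) (snd (pd_contDiff (i := 1) he)) (snd (pd_contDiff (i := 1) hφ)) fst
  have kE := qE_cd ka kb kc hD.ne'
  have kF := qF_cd ka kb kc hD.ne'
  have kG := qG_cd ka kb kc hD.ne'
  have kE1 := qE'_cd ka kb kc ka1 kb1 kc1 hD.ne'
  have kE2 := qE'_cd ka kb kc ka2 kb2 kc2 hD.ne'
  have kF1 := qF'_cd ka kb kc ka1 kb1 kc1 hD.ne'
  have kG1 := qG'_cd ka kb kc ka1 kb1 kc1 hD.ne'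
  have pos := q_pos hc hD
  have kP := P_cd kE kF kG kE2 kG1 pos.1.ne' pos.2
  have kQ := Q_cd kE kF kG kE1 kE2 kF1 pos.1.ne' pos.2
  exact ((snd (pd_contDiff (i := 0) hh)).mul kP).add ((snd (pd_contDiff (i := 1) hh)).mul kQ)

lemma fluxK_integral (σ φ h : ℂ → ℝ) (α β : ℝ) (hσ : ContDiff ℝ (⊤ : ℕ∞) σ)
    (hφ : ContDiff ℝ (⊤ : ℕ∞) φ) (hh : ContDiff ℝ (⊤ : ℕ∞) h) (hhs : HasCompactSupport h) (t : ℝ)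
    (hpos : ∀ z, 0 < Lf (-α) (Real.exp (-(σ z))) (φ z) t ∧
      0 < Lf α (Real.exp (-(σ z))) (φ z) t * Lf (-α) (Real.exp (-(σ z))) (φ z) t -
        Lf β 0 (φ z) t * Lf β 0 (φ z) t) :
    ∫ z : ℂ, h z * scalarCurv (fun w => (Ainv σ φ (t * α) (t * β) w)⁻¹) z *
        Real.sqrt (((Ainv σ φ (t * α) (t * β) z)⁻¹ : Matrix (Fin 2) (Fin 2) ℝ).det)
      = - ∫ z, fluxK σ φ h α β (t, z) := by
  set e : ℂ → ℝ := fun w => Real.exp (-(σ w)) with he_def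
  have he : ContDiff ℝ (⊤ : ℕ∞) e := by fun_prop
  have h0 : ContDiff ℝ (⊤ : ℕ∞) (fun _ : ℂ => (0 : ℝ)) := contDiff_const
  have ht : ContDiff ℝ (⊤ : ℕ∞) (fun _ : ℂ => t) := contDiff_const
  have Lc : ∀ (k : ℝ) {u v : ℂ → ℝ}, ContDiff ℝ (⊤ : ℕ∞) u → ContDiff ℝ (⊤ : ℕ∞) v →
      ContDiff ℝ (⊤ : ℕ∞) (fun w => Lf k (u w) (v w) t) := fun k u v hu hv =>
    contDiff_iff_contDiffAt.2 fun z => Lf_cd k hu.contDiffAt hv.contDiffAt ht.contDiffAt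
  set a : ℂ → ℝ := fun w => Lf α (e w) (φ w) t with ha_def
  set b : ℂ → ℝ := fun w => Lf β 0 (φ w) t with hb_def
  set c : ℂ → ℝ := fun w => Lf (-α) (e w) (φ w) t with hc_def
  have ha : ContDiff ℝ (⊤ : ℕ∞) a := Lc α he hφ
  have hb : ContDiff ℝ (⊤ : ℕ∞) b := Lc β h0 hφ
  have hc : ContDiff ℝ (⊤ : ℕ∞) c := Lc (-α) he hφ
  have hD : ∀ z, 0 < a z * c z - b z * b z := fun z => (hpos z).2
  have hcp : ∀ z, 0 < c z := fun z => (hpos z).1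
  set E : ℂ → ℝ := fun w => qE (a w) (b w) (c w) with hE_def
  set F : ℂ → ℝ := fun w => qF (a w) (b w) (c w) with hF_def
  set G : ℂ → ℝ := fun w => qG (a w) (b w) (c w) with hG_def
  have hE : ContDiff ℝ (⊤ : ℕ∞) E := contDiff_iff_contDiffAt.2 fun z =>
    qE_cd ha.contDiffAt hb.contDiffAt hc.contDiffAt (hD z).ne'
  have hF : ContDiff ℝ (⊤ : ℕ∞) F := contDiff_iff_contDiffAt.2 fun z =>
    qF_cd ha.contDiffAt hb.contDiffAt hc.contDiffAt (hD z).ne'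
  have hG : ContDiff ℝ (⊤ : ℕ∞) G := contDiff_iff_contDiffAt.2 fun z =>
    qG_cd ha.contDiffAt hb.contDiffAt hc.contDiffAt (hD z).ne'
  have hq : ∀ z, 0 < E z ∧ 0 < E z * G z - F z * F z := fun z => q_pos (hcp z) (hD z)
  have df : ∀ {u : ℂ → ℝ}, ContDiff ℝ (⊤ : ℕ∞) u → Differentiable ℝ u := fun hu =>
    hu.differentiable (by simp)
  have hA : ∀ z, (Ainv σ φ (t * α) (t * β) z)⁻¹ = !![E z, F z; F z, G z] := by
    intro z
    have hAz : Ainv σ φ (t * α) (t * β) z = !![a z, b z; b z, c z] := by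
      simp only [Ainv, ha_def, hb_def, hc_def, Lf, he_def]
      congr 2 <;> ring_nf
    rw [hAz]
    apply Matrix.inv_eq_right_inv
    have := (hD z).ne'
    ext i j
    fin_cases i <;> fin_cases j <;>
      simp [Matrix.mul_apply, Fin.sum_univ_two, hE_def, hF_def, hG_def, qE, qF, qG]
    · rw [← mul_div_assoc, ← mul_div_assoc, ← add_div, div_eq_one_iff_eq this]; ring
    · ring
    · ring
    · rw [← mul_div_assoc, ← mul_div_assoc, ← add_div, div_eq_one_iff_eq this]; ring
  have key := curv_formula E F G (pd 0 E) (pd 1 E) (pd 0 F) (pd 1 F) (pd 0 G) (pd 1 G)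
    (df hE) (df hF) (df hG) (df (pd_contDiff hE)) (df (pd_contDiff hE))
    (df (pd_contDiff hF)) (df (pd_contDiff hF)) (df (pd_contDiff hG)) (df (pd_contDiff hG))
    rfl rfl rfl rfl rfl rfl (pd_comm hE 0 1) (pd_comm hF 0 1) (pd_comm hG 0 1)
    (fun z => (hq z).1) (fun z => (hq z).2) (fun w => (Ainv σ φ (t * α) (t * β) w)⁻¹) hA
  set P : ℂ → ℝ := fun w => (F w * pd 1 E w / E w - pd 0 G w) /
    Real.sqrt (E w * G w - F w * F w) with hP_def
  set Q : ℂ → ℝ := fun w => (2 * pd 0 F w - pd 1 E w - F w * pd 0 E w / E w) /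
    Real.sqrt (E w * G w - F w * F w) with hQ_def
  have hP : ContDiff ℝ (⊤ : ℕ∞) P := contDiff_iff_contDiffAt.2 fun z =>
    P_cd hE.contDiffAt hF.contDiffAt hG.contDiffAt (pd_contDiff hE).contDiffAt
      (pd_contDiff hG).contDiffAt (hq z).1.ne' (hq z).2
  have hQ : ContDiff ℝ (⊤ : ℕ∞) Q := contDiff_iff_contDiffAt.2 fun z =>
    Q_cd hE.contDiffAt hF.contDiffAt hG.contDiffAt (pd_contDiff hE).contDiffAt
      (pd_contDiff hE).contDiffAt (pd_contDiff hF).contDiffAt (hq z).1.ne' (hq z).2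
  have hfl : ∀ z, fluxK σ φ h α β (t, z) = pd 0 h z * P z + pd 1 h z * Q z := by
    intro z
    have dz : ∀ i : Fin 2, pd i a z = Lf α (pd i e z) (pd i φ z) t ∧
        pd i b z = Lf β 0 (pd i φ z) t ∧ pd i c z = Lf (-α) (pd i e z) (pd i φ z) t := by
      intro i
      refine ⟨pd_Lf (df he z) (df hφ z), ?_, pd_Lf (df he z) (df hφ z)⟩
      have := pd_Lf (k := β) (t := t) (i := i) (df h0 z) (df hφ z)
      rw [pd_const'] at this
      exact this
    have q0 := pd_q (i := 0) (df ha z) (df hb z) (df hc z) (hD z).ne'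
    have q1 := pd_q (i := 1) (df ha z) (df hb z) (df hc z) (hD z).ne'
    rw [(dz 0).1, (dz 0).2.1, (dz 0).2.2] at q0
    rw [(dz 1).1, (dz 1).2.1, (dz 1).2.2] at q1
    simp only [hP_def, hQ_def]
    rw [show pd 0 E z = _ from q0.1, show pd 0 F z = _ from q0.2.1, show pd 0 G z = _ from q0.2.2,
      show pd 1 E z = _ from q1.1]
    rfl
  have s0 : HasCompactSupport (pd 0 h) := hhs.fderiv_apply ℝ _
  have s1 : HasCompactSupport (pd 1 h) := hhs.fderiv_apply ℝ _
  have c0 := (pd_contDiff (i := 0) hh).continuous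
  have c1 := (pd_contDiff (i := 1) hh).continuous
  calc _ = ∫ z, (h z * pd 0 P z + h z * pd 1 Q z) := by
        congr 1; ext z
        have := key z
        rw [mul_assoc, this]; ring
    _ = (∫ z, h z * pd 0 P z) + ∫ z, h z * pd 1 Q z := by
        apply integral_add
        · exact (hh.continuous.mul (pd_contDiff hP).continuous).integrable_of_hasCompactSupport
            hhs.mul_right
        · exact (hh.continuous.mul (pd_contDiff hQ).continuous).integrable_of_hasCompactSupport
            hhs.mul_right
    _ = -((∫ z, pd 0 h z * P z) + ∫ z, pd 1 h z * Q z) := by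
        rw [ibp 0 h P hh hP hhs, ibp 1 h Q hh hQ hhs]; ring
    _ = _ := by
        rw [← integral_add]
        · simp only [hfl]
        · exact (c0.mul hP.continuous).integrable_of_hasCompactSupport s0.mul_right
        · exact (c1.mul hQ.continuous).integrable_of_hasCompactSupport s1.mul_right

lemma main_dir (σ φ h : ℂ → ℝ) (α β : ℝ) (hσ : ContDiff ℝ (⊤ : ℕ∞) σ)
    (hφ : ContDiff ℝ (⊤ : ℕ∞) φ) (hφs : HasCompactSupport φ)
    (hh : ContDiff ℝ (⊤ : ℕ∞) h) (hhs : HasCompactSupport h) :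
    HasDerivAt (fun t : ℝ =>
      ∫ z : ℂ, h z * scalarCurv (fun w => (Ainv σ φ (t * α) (t * β) w)⁻¹) z *
        Real.sqrt (((Ainv σ φ (t * α) (t * β) z)⁻¹ : Matrix (Fin 2) (Fin 2) ℝ).det))
      (- ∫ z, (φ z * Real.exp (σ z) *
        (α / 2 * (pd 0 (pd 0 h) z - pd 1 (pd 1 h) z - pd 0 σ z * pd 0 h z + pd 1 σ z * pd 1 h z)
        + β * (pd 0 (pd 1 h) z - pd 1 σ z * pd 0 h z / 2 - pd 0 σ z * pd 1 h z / 2)))) 0 := by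
  obtain ⟨δ, hδ, hpos⟩ := exists_delta σ φ α β hσ hφ hφs
  have df : ∀ {u : ℂ → ℝ}, ContDiff ℝ (⊤ : ℕ∞) u → Differentiable ℝ u := fun hu =>
    hu.differentiable (by simp)
  set e : ℂ → ℝ := fun w => Real.exp (-(σ w)) with he_def
  have cs0 : HasCompactSupport (pd 0 h) := hhs.fderiv_apply ℝ _
  have cs1 : HasCompactSupport (pd 1 h) := hhs.fderiv_apply ℝ _
  have ch0 := pd_contDiff (i := 0) hh
  have ch1 := pd_contDiff (i := 1) hh
  set k : ℂ → ℝ := fun z =>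
    pd 0 h z * (- (-(β * φ z) / (2 * e z ^ 2)) * pd 1 e z
      - e z * ((α * pd 0 φ z) / (2 * e z ^ 2) - α * φ z * pd 0 e z / e z ^ 3)) +
    pd 1 h z * (e z * (2 * (-(β * pd 0 φ z) / (2 * e z ^ 2) + β * φ z * pd 0 e z / e z ^ 3) -
      (-(α * pd 1 φ z) / (2 * e z ^ 2) + α * φ z * pd 1 e z / e z ^ 3)) +
      (-(β * φ z) / (2 * e z ^ 2)) * pd 0 e z) with hk_def
  have hder : HasDerivAt (fun t => ∫ z, fluxK σ φ h α β (t, z)) (∫ z, k z) 0 := by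
    apply param_deriv (fluxK σ φ h α β) δ hδ
      (fun t z ht => fluxK_cd σ φ h α β hσ hφ hh t z (hpos t z ht).1 (hpos t z ht).2)
      (tsupport h) hhs
    · intro t z hz
      have : fderiv ℝ h z = 0 := by
        have := fun hz' => hz (support_fderiv_subset ℝ (f := h) hz')
        simpa using this
      simp [fluxK, flux, pd, this]
    · intro z
      have ep : 0 < e z := Real.exp_pos _
      have en := ep.ne'
      have hfd := flux_der (h1 := pd 0 h z) (h2 := pd 1 h z) (e := e z) (e1 := pd 0 e z) (e2 := pd 1 e z) (he := ep)
        (dE := qE_der α β (e z) (φ z) ep) (dF := qF_der α β (e z) (φ z) ep)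
        (dG := qG_der α β (e z) (φ z) ep)
        (dE1 := qE'_der α β (e z) (φ z) (pd 0 e z) (pd 0 φ z) ep)
        (dE2 := qE'_der α β (e z) (φ z) (pd 1 e z) (pd 1 φ z) ep)
        (dF1 := qF'_der α β (e z) (φ z) (pd 0 e z) (pd 0 φ z) ep)
        (dG1 := qG'_der α β (e z) (φ z) (pd 0 e z) (pd 0 φ z) ep)
      refine hfd ?_ ?_ ?_ ?_ ?_ ?_ ?_ ?_
      all_goals try simp [qE, qF, qG, qE', qF', qG', Lf]
      all_goals try field_simp
      all_goals try ring
  have hF : (fun t : ℝ =>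
      ∫ z : ℂ, h z * scalarCurv (fun w => (Ainv σ φ (t * α) (t * β) w)⁻¹) z *
        Real.sqrt (((Ainv σ φ (t * α) (t * β) z)⁻¹ : Matrix (Fin 2) (Fin 2) ℝ).det))
      =ᶠ[nhds 0] fun t => - ∫ z, fluxK σ φ h α β (t, z) := by
    filter_upwards [Metric.ball_mem_nhds (0 : ℝ) hδ] with t ht
    exact fluxK_integral σ φ h α β hσ hφ hh hhs t (fun z => hpos t z (by simpa using ht))
  refine (hder.fun_neg.congr_of_eventuallyEq hF).congr_deriv ?_
  congr 1
  set s : ℂ → ℝ := fun w => Real.exp (σ w) with hs_def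
  have hs : ContDiff ℝ (⊤ : ℕ∞) s := by fun_prop
  set X : ℂ → ℝ := fun z => φ z * (s z * (-(α / 2) * pd 0 h z - β * pd 1 h z)) with hX_def
  set Y : ℂ → ℝ := fun z => φ z * (s z * ((α / 2) * pd 1 h z)) with hY_def
  have hX : ContDiff ℝ (⊤ : ℕ∞) X := by fun_prop
  have hY : ContDiff ℝ (⊤ : ℕ∞) Y := by fun_prop
  have sX : HasCompactSupport X := hφs.mul_right
  have sY : HasCompactSupport Y := hφs.mul_right
  have hpt : ∀ z, k z = φ z * s z *
        (α / 2 * (pd 0 (pd 0 h) z - pd 1 (pd 1 h) z - pd 0 σ z * pd 0 h z + pd 1 σ z * pd 1 h z)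
        + β * (pd 0 (pd 1 h) z - pd 1 σ z * pd 0 h z / 2 - pd 0 σ z * pd 1 h z / 2))
        + (pd 0 X z + pd 1 Y z) := by
    intro z
    have d1 := df hφ
    have d2 := df hs
    have d3 := df ch0
    have d4 := df ch1
    have d5 := df hσ
    have es : ∀ i, pd i s z = s z * pd i σ z := fun i => pd_exp' (d5 z)
    have ee : ∀ i, pd i e z = e z * (-pd i σ z) := fun i => by
      rw [he_def, pd_exp' (by fun_prop), pd_neg']
    have hse : e z = (s z)⁻¹ := by simp [he_def, hs_def, Real.exp_neg]
    have sn : s z ≠ 0 := (Real.exp_pos _).ne'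
    rw [hX_def, hY_def, hk_def]
    simp (disch := fun_prop) only [pd_sub', pd_mul', pd_const', es, ee]
    rw [hse]
    field_simp
    ring
  have ik : ∫ z, (φ z * s z *
        (α / 2 * (pd 0 (pd 0 h) z - pd 1 (pd 1 h) z - pd 0 σ z * pd 0 h z + pd 1 σ z * pd 1 h z)
        + β * (pd 0 (pd 1 h) z - pd 1 σ z * pd 0 h z / 2 - pd 0 σ z * pd 1 h z / 2))
        + (pd 0 X z + pd 1 Y z)) = _ := integral_add ?_ ?_
  · simp only [hpt]
    rw [ik, integral_add, integral_pd_zero 0 X hX sX, integral_pd_zero 1 Y hY sY]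
    · simp [hs_def]
    · exact (pd_contDiff hX).continuous.integrable_of_hasCompactSupport (sX.fderiv_apply ℝ _)
    · exact (pd_contDiff hY).continuous.integrable_of_hasCompactSupport (sY.fderiv_apply ℝ _)
  · have c1 := (pd_contDiff (i := 0) ch0).continuous
    have c2 := (pd_contDiff (i := 1) ch1).continuous
    have c3 := (pd_contDiff (i := 0) ch1).continuous
    have c4 := (pd_contDiff (i := 0) hσ).continuous
    have c5 := (pd_contDiff (i := 1) hσ).continuous
    have c6 := ch0.continuous
    have c7 := ch1.continuous
    have c8 := hs.continuous
    have c9 := hφ.continuous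
    refine Continuous.integrable_of_hasCompactSupport (by fun_prop) ?_
    exact (hφs.mul_right).mul_right
  · exact ((pd_contDiff hX).continuous.integrable_of_hasCompactSupport (sX.fderiv_apply ℝ _)).add
      ((pd_contDiff hY).continuous.integrable_of_hasCompactSupport (sY.fderiv_apply ℝ _))

lemma fderiv_ofReal' {f : ℂ → ℝ} {z : ℂ} (hf : DifferentiableAt ℝ f z) (v : ℂ) :
    fderiv ℝ (fun w => (f w : ℂ)) z v = ((fderiv ℝ f z v : ℝ) : ℂ) := by
  have := (Complex.ofRealCLM.hasFDerivAt.comp z hf.hasFDerivAt).fderiv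
  have h2 : (fun w => (f w : ℂ)) = (Complex.ofRealCLM ∘ f) := rfl
  rw [h2, this]; simp

lemma wz_ofReal {f : ℂ → ℝ} {z : ℂ} (hf : DifferentiableAt ℝ f z) :
    wz (fun w => (f w : ℂ)) z = ((pd 0 f z : ℝ) - Complex.I * (pd 1 f z : ℝ)) / 2 := by
  simp only [wz, fderiv_ofReal' hf, pd]; simp

lemma wz_wz {h : ℂ → ℝ} (hh : ContDiff ℝ (⊤ : ℕ∞) h) (z : ℂ) :
    wz (wz (fun w => (h w : ℂ))) z =
      ((pd 0 (pd 0 h) z - pd 1 (pd 1 h) z : ℝ) - 2 * Complex.I * (pd 0 (pd 1 h) z : ℝ)) / 4 := by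
  have df : ∀ {u : ℂ → ℝ}, ContDiff ℝ (⊤ : ℕ∞) u → Differentiable ℝ u := fun hu =>
    hu.differentiable (by simp)
  have h1 : wz (fun w => (h w : ℂ)) = fun w =>
      (1 / 2 : ℂ) * ((pd 0 h w : ℝ) : ℂ) - (Complex.I / 2) * ((pd 1 h w : ℝ) : ℂ) := by
    ext w; rw [wz_ofReal (df hh w)]; ring
  have d0 := df (pd_contDiff (i := 0) hh) z
  have d1 := df (pd_contDiff (i := 1) hh) z
  have D : ∀ {u : ℂ → ℝ}, DifferentiableAt ℝ u z →
      DifferentiableAt ℝ (fun w => (u w : ℂ)) z := fun hu =>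
    Complex.ofRealCLM.differentiableAt.comp z hu
  have h2 : ∀ v, fderiv ℝ (wz (fun w => (h w : ℂ))) z v =
      (1 / 2 : ℂ) * ((fderiv ℝ (pd 0 h) z v : ℝ) : ℂ) -
        (Complex.I / 2) * ((fderiv ℝ (pd 1 h) z v : ℝ) : ℂ) := by
    intro v
    rw [h1, fderiv_fun_sub ((D d0).const_mul _) ((D d1).const_mul _),
      fderiv_const_mul (D d0), fderiv_const_mul (D d1)]
    simp [fderiv_ofReal' d0, fderiv_ofReal' d1]
  have hc := pd_comm hh 1 0 z
  rw [wz, h2, h2]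
  change (1 / 2 * ((pd 0 (pd 0 h) z : ℝ) : ℂ) - Complex.I / 2 * ((pd 0 (pd 1 h) z : ℝ) : ℂ) -
    Complex.I * (1 / 2 * ((pd 1 (pd 0 h) z : ℝ) : ℂ) -
      Complex.I / 2 * ((pd 1 (pd 1 h) z : ℝ) : ℂ))) / 2 = _
  rw [hc]
  push_cast
  linear_combination (((pd 1 (pd 1 h) z : ℝ) : ℂ) / 4) * Complex.I_mul_I

/-- Variation of the curvature functional F(ε) = ∫ h R_{g_ε} dv_{g_ε},
where the perturbed metric g_ε is defined by its inverse components
g_ε^{zz̄} = 2e^{−σ}, g_ε^{zz} = εφ: the holomorphic derivative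
∂_ε F|₀ = ½(∂_{ε₁} − i∂_{ε₂})F|₀ equals ∫ (−∂_z²h + ∂_zσ ∂_z h) φ e^σ d²z. -/
theorem stmt13 (σ φ h : ℂ → ℝ) (hσ : ContDiff ℝ (⊤ : ℕ∞) σ)
    (hφ : ContDiff ℝ (⊤ : ℕ∞) φ) (hφs : HasCompactSupport φ)
    (hh : ContDiff ℝ (⊤ : ℕ∞) h) (hhs : HasCompactSupport h)
    (F : ℝ → ℝ → ℝ)
    (hF : ∀ ε₁ ε₂ : ℝ, F ε₁ ε₂ =
      ∫ z : ℂ, h z * scalarCurv (fun w => (Ainv σ φ ε₁ ε₂ w)⁻¹) z *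
        Real.sqrt (((Ainv σ φ ε₁ ε₂ z)⁻¹ : Matrix (Fin 2) (Fin 2) ℝ).det)) :
    (1/2 : ℂ) * ((deriv (fun t : ℝ => ((F t 0 : ℝ) : ℂ)) 0) -
        Complex.I * (deriv (fun t : ℝ => ((F 0 t : ℝ) : ℂ)) 0)) =
      ∫ z : ℂ, (-(wz (wz (fun w => (h w : ℂ))) z) +
        wz (fun w => (σ w : ℂ)) z * wz (fun w => (h w : ℂ)) z) *
          (φ z : ℂ) * (Real.exp (σ z) : ℂ) := by
  have H1 := main_dir σ φ h 1 0 hσ hφ hφs hh hhs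
  have H2 := main_dir σ φ h 0 1 hσ hφ hφs hh hhs
  simp only [mul_one, mul_zero, ← hF] at H1 H2
  rw [H1.ofReal_comp.deriv, H2.ofReal_comp.deriv]
  have df : ∀ {u : ℂ → ℝ}, ContDiff ℝ (⊤ : ℕ∞) u → Differentiable ℝ u := fun hu =>
    hu.differentiable (by simp)
  have ch0 := pd_contDiff (i := 0) hh
  have ch1 := pd_contDiff (i := 1) hh
  have c1 := (pd_contDiff (i := 0) ch0).continuous
  have c2 := (pd_contDiff (i := 1) ch1).continuous
  have c3 := (pd_contDiff (i := 0) ch1).continuous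
  have c4 := (pd_contDiff (i := 0) hσ).continuous
  have c5 := (pd_contDiff (i := 1) hσ).continuous
  have c6 := ch0.continuous
  have c7 := ch1.continuous
  have c8 := hσ.continuous
  have c9 := hφ.continuous
  rw [← integral_neg, ← integral_neg, ← integral_complex_ofReal, ← integral_complex_ofReal,
    ← integral_const_mul, ← integral_sub, ← integral_const_mul]
  · congr 1
    ext z
    rw [wz_wz hh, wz_ofReal (df hh z), wz_ofReal (df hσ z)]
    push_cast
    linear_combination (-(((pd 1 σ z : ℝ) : ℂ) * ((pd 1 h z : ℝ) : ℂ) * (φ z : ℂ) *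
      Complex.exp (σ z)) / 4) * Complex.I_mul_I
  · refine Continuous.integrable_of_hasCompactSupport (by fun_prop) ?_
    refine HasCompactSupport.intro hφs (fun z hz => ?_)
    simp [image_eq_zero_of_notMem_tsupport hz]
  · refine Continuous.integrable_of_hasCompactSupport (by fun_prop) ?_
    refine HasCompactSupport.intro hφs (fun z hz => ?_)
    simp [image_eq_zero_of_notMem_tsupport hz]
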